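/- Let (ΛZ,D) be an elliptic Sullivan algebra over Q with Z = Z_0 ⊕ Z_1, where D vanishes on Z_0, Z_1 is concentrated in odd degrees, and D maps a basis of Z_1 onto a regular sequence a_1,…,a_k in ΛZ_0. Then k = dim Z_0^even, and the images ā_1,…,ā_k of the a_i under the projection ΛZ_0 → ΛZ_0^even (sending Z_0^odd to 0) form a regular sequence in the polynomial algebra ΛZ_0^even. -/

import Mathlib

/-!
Commutative differential graded algebras over `ℚ`, (minimal) Sullivan algebras,
ellipticity and formality; cf. Amann–Zoller, "On the toral rank conjecture and
some consequences of new variants of formality".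
-/

/-- A non-negatively graded commutative (in the graded sense) differential
graded algebra over `ℚ`. -/
structure CDGA : Type 1 where
  carrier : Type
  [ringStr : Ring carrier]
  [algStr : Algebra ℚ carrier]
  /-- The grading, by `ℚ`-subspaces. -/
  grading : ℤ → Submodule ℚ carrier
  /-- The grading is an internal direct sum decomposition. -/
  internal : DirectSum.IsInternal grading
  one_mem : (1 : carrier) ∈ grading 0
  mul_mem : ∀ {i j : ℤ} {a b : carrier}, a ∈ grading i → b ∈ grading j → a * b ∈ grading (i + j)
  /-- Graded commutativity (Koszul signs). -/
  gcomm : ∀ {i j : ℤ} {a b : carrier}, a ∈ grading i → b ∈ grading j →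
      a * b = ((-1 : ℚ) ^ (i * j)) • (b * a)
  /-- Non-negative grading. -/
  nonneg : ∀ i : ℤ, i < 0 → grading i = ⊥
  /-- The differential. -/
  d : carrier →ₗ[ℚ] carrier
  d_mem : ∀ {i : ℤ} {a : carrier}, a ∈ grading i → d a ∈ grading (i + 1)
  d_sq : ∀ a : carrier, d (d a) = 0
  /-- Graded Leibniz rule. -/
  leibniz : ∀ {i : ℤ} {a : carrier}, a ∈ grading i → ∀ b : carrier,
      d (a * b) = d a * b + ((-1 : ℚ) ^ i) • (a * d b)

attribute [instance] CDGA.ringStr CDGA.algStr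

/-- The cohomology of a cdga, as a `ℚ`-vector space. -/
abbrev CDGA.Hspace (A : CDGA) : Type :=
  ↥(LinearMap.ker A.d) ⧸ ((LinearMap.range A.d).comap (LinearMap.ker A.d).subtype)

/-- The degree-`n` cocycles of a cdga, inside the cocycle subspace. -/
def CDGA.cocyclesAt (A : CDGA) (n : ℤ) : Submodule ℚ ↥(LinearMap.ker A.d) :=
  (A.grading n).comap (LinearMap.ker A.d).subtype

/-- The degree-`n` part of the cohomology of a cdga. -/
def CDGA.Hpiece (A : CDGA) (n : ℤ) : Submodule ℚ A.Hspace :=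
  (A.cocyclesAt n).map ((LinearMap.range A.d).comap (LinearMap.ker A.d).subtype).mkQ

/-- A morphism of cdgas: a degree-preserving algebra map commuting with the
differentials. -/
structure CDGAHom (A B : CDGA) where
  toFun : A.carrier →ₐ[ℚ] B.carrier
  map_grading : ∀ i : ℤ, ∀ x ∈ A.grading i, toFun x ∈ B.grading i
  comm_d : ∀ x : A.carrier, toFun (A.d x) = B.d (toFun x)

/-- A morphism of cdgas is a quasi-isomorphism if it induces a bijection on
cohomology. -/
def CDGAHom.IsQuasiIso {A B : CDGA} (f : CDGAHom A B) : Prop :=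
  (∀ x : A.carrier, A.d x = 0 → f.toFun x ∈ LinearMap.range B.d →
      x ∈ LinearMap.range A.d) ∧
  (∀ y : B.carrier, B.d y = 0 → ∃ x : A.carrier, A.d x = 0 ∧
      f.toFun x - y ∈ LinearMap.range B.d)

/-- Two cdgas are connected by a chain (zigzag) of cdga quasi-isomorphisms. -/
def CDGAConnected (A B : CDGA) : Prop :=
  Relation.EqvGen (fun X Y : CDGA => ∃ f : CDGAHom X Y, f.IsQuasiIso) A B

/-- A cdga is formal if it is connected to its cohomology algebra, equipped
with the zero differential, by a chain of cdga quasi-isomorphisms; equivalently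
(as stated here), it is connected by a chain of cdga quasi-isomorphisms to a
cdga with zero differential. -/
def CDGA.IsFormal (A : CDGA) : Prop :=
  ∃ B : CDGA, B.d = 0 ∧ CDGAConnected A B

/-- The monomial `∏ g x ^ e x` associated with a finitely supported exponent
function `e`, the product being taken in increasing order of the (linearly
ordered) index set. -/
def monomialIn {A : Type} [Ring A] {ι : Type} (lo : LinearOrder ι)
    (g : ι → A) (e : ι →₀ ℕ) : A :=
  letI := lo
  ((e.support.sort (· ≤ ·)).map fun x => g x ^ e x).prod

/-- A Sullivan algebra `(ΛV, d)`: the free graded-commutative algebra on a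
simply connected graded vector space `V = V^{≥2}` of finite type.  Freeness is
expressed by the requirement that the admissible monomials (square-free in the
odd-degree generators) in a homogeneous basis of `V` form a `ℚ`-basis. -/
structure SullivanAlgebra extends CDGA where
  /-- The space of generators, as a graded subspace. -/
  V : ℤ → Submodule ℚ carrier
  V_le : ∀ i : ℤ, V i ≤ grading i
  /-- Simple connectedness: `V = V^{≥2}`. -/
  V_lower : ∀ i : ℤ, i ≤ 1 → V i = ⊥
  /-- Finite type. -/
  V_findim : ∀ i : ℤ, FiniteDimensional ℚ ↥(V i)
  /-- `ΛV` is free graded-commutative on `V`. -/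
  free : ∃ (ι : Type) (lo : LinearOrder ι) (deg : ι → ℤ) (g : ι → carrier),
    (∀ x : ι, g x ∈ V (deg x)) ∧
    (∀ i : ℤ, V i = Submodule.span ℚ (g '' {x : ι | deg x = i})) ∧
    LinearIndependent ℚ
      (fun e : {e : ι →₀ ℕ // ∀ x : ι, Odd (deg x) → e x ≤ 1} =>
        monomialIn lo g e.1) ∧
    ⊤ ≤ Submodule.span ℚ
      (Set.range fun e : {e : ι →₀ ℕ // ∀ x : ι, Odd (deg x) → e x ≤ 1} =>
        monomialIn lo g e.1)

/-- The set of homogeneous elements of positive degree. -/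
def CDGA.posSet (A : CDGA) : Set A.carrier :=
  {a : A.carrier | ∃ i : ℤ, 0 < i ∧ a ∈ A.grading i}

/-- The decomposable elements `Λ^{≥2}V = A⁺ · A⁺` of a connected cdga. -/
def CDGA.decomposables (A : CDGA) : Submodule ℚ A.carrier :=
  Submodule.span ℚ
    {z : A.carrier | ∃ x ∈ A.posSet, ∃ y ∈ A.posSet, z = x * y}

/-- A Sullivan algebra is minimal if `d(V) ⊆ Λ^{≥2}V`. -/
def SullivanAlgebra.IsMinimal (A : SullivanAlgebra) : Prop :=
  ∀ i : ℤ, ∀ v ∈ A.V i, A.d v ∈ A.toCDGA.decomposables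

/-- A Sullivan algebra is elliptic if both `V` and `H^*(ΛV, d)` are
finite-dimensional. -/
def SullivanAlgebra.Elliptic (A : SullivanAlgebra) : Prop :=
  (∃ N : ℤ, ∀ i : ℤ, N ≤ i → A.V i = ⊥) ∧
  FiniteDimensional ℚ A.toCDGA.Hspace

/-- The total dimension of the odd-degree part of `V`. -/
noncomputable def SullivanAlgebra.oddDim (A : SullivanAlgebra) : ℕ :=
  finsum fun i : ℤ => if Odd i then Module.finrank ℚ ↥(A.V i) else 0

/-- The total dimension of the even-degree part of `V`. -/
noncomputable def SullivanAlgebra.evenDim (A : SullivanAlgebra) : ℕ :=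
  finsum fun i : ℤ => if Even i then Module.finrank ℚ ↥(A.V i) else 0

/-- A (finite) sequence of elements of a ring is a regular sequence if each
element is a nonzerodivisor modulo the (left) ideal generated by the preceding
ones. -/
def IsRegularSeq {A : Type} [Ring A] {k : ℕ} (a : Fin k → A) : Prop :=
  ∀ (j : Fin k) (x : A),
    a j * x ∈ Ideal.span (a '' {j' : Fin k | j' < j}) →
    x ∈ Ideal.span (a '' {j' : Fin k | j' < j})

/-!
Each odd generator `y` of `ΛZ₀` comes with a contraction, an antiderivation `D` with `D y = 1`; it
shows that `z * y = 0` forces `z` to be a multiple of `y`. Hence a central regular sequence stays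
regular after dividing out the odd generators one at a time, which takes `ΛZ₀` to the polynomial
algebra `ΛZ₀^even` and `a` to `ā`.

All even generators are cocycles and the projection `ΛZ → ΛZ₀^even / (ā)` annihilates boundaries,
so `H^*(ΛZ)` surjects onto `ΛZ₀^even / (ā)`. When `H^*(ΛZ)` is finite-dimensional, so is this
quotient, and the length of `ā` is the height of the ideal generated by the even generators, which
is the number of these generators.
-/

section Adjoin

variable {K A : Type*} [CommSemiring K] [Semiring A] [Algebra K A] {S : Set A}
  {N : Submodule K A}

theorem adjoin_le_of_mul_mem_left (one_mem : 1 ∈ N) (mul_mem : ∀ s ∈ S, ∀ u ∈ N, s * u ∈ N) :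
    Subalgebra.toSubmodule (Algebra.adjoin K S) ≤ N := by
  rw [Algebra.adjoin_eq_span, Submodule.span_le]
  intro u hu
  induction hu using Submonoid.closure_induction_left with
  | one => exact one_mem
  | mul_left s hs u _ ih => exact mul_mem s hs u ih

theorem adjoin_le_of_mul_mem_right (one_mem : 1 ∈ N) (mul_mem : ∀ s ∈ S, ∀ u ∈ N, u * s ∈ N) :
    Subalgebra.toSubmodule (Algebra.adjoin K S) ≤ N := by
  rw [Algebra.adjoin_eq_span, Submodule.span_le]
  intro u hu
  induction hu using Submonoid.closure_induction_right with
  | one => exact one_mem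
  | mul_right u _ s hs ih => exact mul_mem s hs u ih

end Adjoin

/-- The commutation rules of a family `γ` of elements of degrees `deg` in a graded-commutative
algebra; since `2` need not be invertible, odd elements are required to square to zero. -/
structure KoszulCommuting {ι B : Type*} [Ring B] (deg : ι → ℤ) (γ : ι → B) : Prop where
  even_comm : ∀ x, Even (deg x) → ∀ y, γ x * γ y = γ y * γ x
  odd_anticomm : ∀ x y, Odd (deg x) → Odd (deg y) → γ x * γ y = -(γ y * γ x)
  odd_sq : ∀ x, Odd (deg x) → γ x * γ x = 0

theorem monomialIn_eq_prod_sort {A ι : Type} [Ring A] (lo : LinearOrder ι) (g : ι → A)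
    (e : ι →₀ ℕ) {s : Finset ι} (hs : e.support ⊆ s) :
    monomialIn lo g e = ((s.sort (· ≤ ·)).map fun x => g x ^ e x).prod := by
  have sort_support : e.support.sort (· ≤ ·) = (s.sort (· ≤ ·)).filter (fun x => e x ≠ 0) := by
    refine List.Perm.eq_of_pairwise (le := (· ≤ ·)) (fun _ _ _ _ => le_antisymm)
      (Finset.pairwise_sort _ _) ((Finset.pairwise_sort _ _).filter _) ?_
    rw [List.perm_ext_iff_of_nodup (Finset.sort_nodup _ _) ((Finset.sort_nodup _ _).filter _)]
    intro x
    simpa using @hs x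
  unfold monomialIn
  rw [sort_support]
  generalize s.sort (· ≤ ·) = l
  induction l with
  | nil => rfl
  | cons x l ih => by_cases hx : e x = 0 <;> simp [hx, ← ih]

theorem map_monomialIn {A B ι : Type} [Ring A] [Ring B] (f : A →+* B) (lo : LinearOrder ι)
    (g : ι → A) (e : ι →₀ ℕ) : f (monomialIn lo g e) = monomialIn lo (fun x => f (g x)) e := by
  simp [monomialIn, map_list_prod, Function.comp_def]

namespace KoszulCommuting

section Ring

variable {ι B C : Type*} [Ring B] [Ring C] {deg : ι → ℤ} {γ : ι → B}

theorem prod {δ : ι → C} (hγ : KoszulCommuting deg γ) (hδ : KoszulCommuting deg δ) :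
    KoszulCommuting deg fun x => (γ x, δ x) where
  even_comm x hx y := Prod.ext (hγ.even_comm x hx y) (hδ.even_comm x hx y)
  odd_anticomm x y hx hy := Prod.ext (hγ.odd_anticomm x y hx hy) (hδ.odd_anticomm x y hx hy)
  odd_sq x hx := Prod.ext (hγ.odd_sq x hx) (hδ.odd_sq x hx)

theorem mul_eq_or_eq_neg (hγ : KoszulCommuting deg γ) (x y : ι) :
    γ x * γ y = γ y * γ x ∨ γ x * γ y = -(γ y * γ x) := by
  rcases Int.even_or_odd (deg x) with hx | hx
  · exact .inl (hγ.even_comm x hx y)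
  rcases Int.even_or_odd (deg y) with hy | hy
  · exact .inl (hγ.even_comm y hy x).symm
  · exact .inr (hγ.odd_anticomm x y hx hy)

theorem mul_pow_eq_or_eq_neg (hγ : KoszulCommuting deg γ) (x y : ι) (n : ℕ) :
    γ x * γ y ^ n = γ y ^ n * γ x ∨ γ x * γ y ^ n = -(γ y ^ n * γ x) := by
  induction n with
  | zero => simp
  | succ n ih =>
    rw [pow_succ, ← mul_assoc, mul_assoc _ (γ y) (γ x)]
    rcases hγ.mul_eq_or_eq_neg x y with h | h <;> rcases ih with ih | ih <;>
      simp [ih, mul_assoc, h]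

theorem mul_prod_map_pow (hγ : KoszulCommuting deg γ) {x : ι} {e e' : ι → ℕ}
    (he'x : e' x = e x + 1) (he' : ∀ y, y ≠ x → e' y = e y) {l : List ι} (hl : l.Nodup)
    (hx : x ∈ l) :
    γ x * (l.map fun y => γ y ^ e y).prod = (l.map fun y => γ y ^ e' y).prod ∨
      γ x * (l.map fun y => γ y ^ e y).prod = -(l.map fun y => γ y ^ e' y).prod := by
  induction l with
  | nil => simp at hx
  | cons y l ih =>
    obtain ⟨hy, hl⟩ := List.nodup_cons.1 hl
    simp only [List.map_cons, List.prod_cons, ← mul_assoc]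
    by_cases hyx : y = x
    · subst hyx
      have tail_eq : (l.map fun z => γ z ^ e' z) = l.map fun z => γ z ^ e z :=
        List.map_congr_left fun z hz => by rw [he' z (ne_of_mem_of_not_mem hz hy)]
      left
      rw [tail_eq, he'x, pow_succ']
    · have hxl : x ∈ l := (List.mem_cons.1 hx).resolve_left (Ne.symm hyx)
      rw [he' y hyx]
      rcases hγ.mul_pow_eq_or_eq_neg x y (e y) with h | h <;> rcases ih hl hxl with ih | ih <;>
        simp [h, mul_assoc, ih]

end Ring

section Monomials

variable {K ι B : Type} [CommRing K] [Ring B] [Algebra K B] {deg : ι → ℤ} {γ : ι → B}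

theorem mul_monomialIn (hγ : KoszulCommuting deg γ) (lo : LinearOrder ι) (x : ι) (e : ι →₀ ℕ) :
    γ x * monomialIn lo γ e = monomialIn lo γ (e + Finsupp.single x 1) ∨
      γ x * monomialIn lo γ e = -monomialIn lo γ (e + Finsupp.single x 1) := by
  have support_le : (e + Finsupp.single x 1).support ⊆ insert x e.support := by
    intro y hy
    contrapose! hy
    simp_all [eq_comm]
  rw [monomialIn_eq_prod_sort lo γ e (Finset.subset_insert x _),
    monomialIn_eq_prod_sort lo γ _ support_le]
  exact hγ.mul_prod_map_pow (by simp) (fun y hy => by simp [hy.symm]) (Finset.sort_nodup _ _)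
    (by simp)

theorem monomialIn_eq_zero (hγ : KoszulCommuting deg γ) (lo : LinearOrder ι) {e : ι →₀ ℕ} {x : ι}
    (hx : Odd (deg x)) (he : 2 ≤ e x) : monomialIn lo γ e = 0 := by
  apply List.prod_eq_zero
  refine List.mem_map.2 ⟨x, ?_, ?_⟩
  · simp only [Finset.mem_sort, Finsupp.mem_support_iff]
    omega
  · rw [← Nat.sub_add_cancel he, pow_add, pow_two, hγ.odd_sq x hx, mul_zero]

theorem adjoin_le_span_monomialIn (hγ : KoszulCommuting deg γ) (lo : LinearOrder ι) :
    Subalgebra.toSubmodule (Algebra.adjoin K (Set.range γ)) ≤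
      Submodule.span K (Set.range fun e : {e : ι →₀ ℕ // ∀ x, Odd (deg x) → e x ≤ 1} =>
        monomialIn lo γ e.1) := by
  set M := Submodule.span K (Set.range fun e : {e : ι →₀ ℕ // ∀ x, Odd (deg x) → e x ≤ 1} =>
    monomialIn lo γ e.1)
  have mem_M : ∀ e, monomialIn lo γ e ∈ M := by
    intro e
    by_cases he : ∀ x, Odd (deg x) → e x ≤ 1
    · exact Submodule.subset_span ⟨⟨e, he⟩, rfl⟩
    · push Not at he
      obtain ⟨x, hx, hex⟩ := he
      rw [hγ.monomialIn_eq_zero lo hx hex]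
      exact M.zero_mem
  refine adjoin_le_of_mul_mem_left ?_ ?_
  · simpa [monomialIn] using mem_M 0
  · rintro _ ⟨x, rfl⟩ u hu
    refine Submodule.span_induction (p := fun u _ => γ x * u ∈ M) ?_ (by simp) ?_ ?_ hu
    · rintro _ ⟨e, rfl⟩
      rcases hγ.mul_monomialIn lo x e.1 with h | h
      · exact h ▸ mem_M _
      · exact h ▸ M.neg_mem (mem_M _)
    · intro u v _ _ hu hv
      exact mul_add (γ x) u v ▸ M.add_mem hu hv
    · intro c u _ hu
      exact mul_smul_comm c (γ x) u ▸ M.smul_mem c hu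

variable {A : Type} [Ring A] [Algebra K A] {g : ι → A}

theorem adjoin_fst_injective (hg : KoszulCommuting deg g) (hγ : KoszulCommuting deg γ)
    (lo : LinearOrder ι)
    (indep : LinearIndependent K fun e : {e : ι →₀ ℕ // ∀ x, Odd (deg x) → e x ≤ 1} =>
      monomialIn lo g e.1) :
    Function.Injective ((AlgHom.fst K A B).comp
      (Algebra.adjoin K (Set.range fun x => (g x, γ x))).val) := by
  rw [injective_iff_map_eq_zero]
  rintro ⟨s, hs⟩ (hs0 : s.1 = 0)
  have fst_monomialIn : ∀ e, (monomialIn lo (fun x => (g x, γ x)) e).1 = monomialIn lo g e :=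
    fun e => map_monomialIn (RingHom.fst A B) lo _ e
  have disjoint_ker := Submodule.range_ker_disjoint (f := LinearMap.fst K A B)
    (v := fun e : {e : ι →₀ ℕ // ∀ x, Odd (deg x) → e x ≤ 1} =>
      monomialIn lo (fun x => (g x, γ x)) e.1) (by convert indep using 2; exact fst_monomialIn _)
  exact Subtype.ext <| Submodule.disjoint_def.1 disjoint_ker s
    ((hg.prod hγ).adjoin_le_span_monomialIn lo hs) hs0

/-- The subalgebra of `A × B` generated by the pairs `(g x, γ x)` is the graph of the required
homomorphism. -/
theorem exists_algHom (hg : KoszulCommuting deg g) (hγ : KoszulCommuting deg γ)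
    (lo : LinearOrder ι)
    (indep : LinearIndependent K fun e : {e : ι →₀ ℕ // ∀ x, Odd (deg x) → e x ≤ 1} =>
      monomialIn lo g e.1)
    (adjoin_eq_top : Algebra.adjoin K (Set.range g) = ⊤) :
    ∃ Φ : A →ₐ[K] B, ∀ x, Φ (g x) = γ x := by
  set G := Algebra.adjoin K (Set.range fun x => (g x, γ x))
  have pair_mem : ∀ x, (g x, γ x) ∈ G := fun x => Algebra.subset_adjoin ⟨x, rfl⟩
  have surjective : Function.Surjective ((AlgHom.fst K A B).comp G.val) := by
    rw [← AlgHom.range_eq_top, eq_top_iff, ← adjoin_eq_top, Algebra.adjoin_le_iff]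
    rintro _ ⟨x, rfl⟩
    exact ⟨⟨_, pair_mem x⟩, rfl⟩
  let graph := AlgEquiv.ofBijective _ ⟨hg.adjoin_fst_injective hγ lo indep, surjective⟩
  refine ⟨((AlgHom.snd K A B).comp G.val).comp graph.symm.toAlgHom, fun x => ?_⟩
  have symm_apply : graph.symm (g x) = ⟨_, pair_mem x⟩ :=
    (AlgEquiv.symm_apply_eq graph).2 rfl
  exact congrArg (fun s : G => s.1.2) symm_apply

end Monomials

end KoszulCommuting

section RegularModulo

variable {E : Type} [Ring E] {k : ℕ}

/-- Regularity of a sequence modulo a left ideal `I`: each `a j` is a left nonzerodivisor modulo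
the left ideal generated by `I` and the preceding elements. -/
def IsRegularSeqMod (I : Ideal E) (a : Fin k → E) : Prop :=
  ∀ (j : Fin k) (x : E), a j * x ∈ I ⊔ Ideal.span (a '' {j' : Fin k | j' < j}) →
    x ∈ I ⊔ Ideal.span (a '' {j' : Fin k | j' < j})

theorem isRegularSeqMod_bot {a : Fin k → E} : IsRegularSeqMod ⊥ a ↔ IsRegularSeq a := by
  simp only [IsRegularSeqMod, IsRegularSeq, bot_sup_eq]

theorem isRegularSeqMod_ker_iff {B : Type} [Ring B] {f : E →+* B} (hf : Function.Surjective f)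
    {a : Fin k → E} : IsRegularSeqMod (RingHom.ker f) a ↔ IsRegularSeq (f ∘ a) := by
  have mem_iff : ∀ (s : Set (Fin k)) (x : E),
      x ∈ RingHom.ker f ⊔ Ideal.span (a '' s) ↔ f x ∈ Ideal.span (f ∘ a '' s) := by
    intro s x
    rw [Set.image_comp, ← Ideal.map_span, ← Ideal.mem_comap,
      Ideal.comap_map_of_surjective f hf, sup_comm, RingHom.ker]
  simp only [IsRegularSeqMod, IsRegularSeq, mem_iff, map_mul, Function.comp_apply, hf.forall]

theorem IsRegularSeq.of_comp_bijective {B : Type} [Ring B] {f : E →+* B}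
    (hf : Function.Bijective f) {a : Fin k → E} (h : IsRegularSeq (f ∘ a)) : IsRegularSeq a := by
  rwa [← isRegularSeqMod_ker_iff hf.2, (RingHom.injective_iff_ker_eq_bot f).1 hf.1,
    isRegularSeqMod_bot] at h

/-- The left ideal generated by the first `n` terms of a sequence. -/
def prefixIdeal (a : Fin k → E) (n : ℕ) : Ideal E :=
  Ideal.span (a '' {j : Fin k | (j : ℕ) < n})

theorem prefixIdeal_zero (a : Fin k → E) : prefixIdeal a 0 = ⊥ := by
  simp [prefixIdeal]

theorem prefixIdeal_succ (a : Fin k → E) (j : Fin k) :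
    prefixIdeal a (j + 1) = prefixIdeal a j ⊔ Ideal.span {a j} := by
  have initial_eq : {i : Fin k | (i : ℕ) < j + 1} = {i : Fin k | (i : ℕ) < j} ∪ {j} := by
    ext i
    simp only [Set.mem_ofPred_eq, Set.mem_union, Set.mem_singleton_iff, Fin.ext_iff]
    omega
  rw [prefixIdeal, prefixIdeal, initial_eq, Set.image_union, Set.image_singleton,
    Ideal.span_union]

theorem mul_mem_sup_prefixIdeal {I : Ideal E} {a : Fin k → E} (central : ∀ j x, a j * x = x * a j)
    {y : E} (hIy : ∀ u ∈ I, u * y ∈ I) {n : ℕ} {u : E} (hu : u ∈ I ⊔ prefixIdeal a n) :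
    u * y ∈ I ⊔ prefixIdeal a n := by
  suffices I ⊔ prefixIdeal a n ≤ Submodule.comap (LinearMap.toSpanSingleton E E y)
      (I ⊔ prefixIdeal a n) from this hu
  refine sup_le (fun u hu => Ideal.mem_sup_left (hIy u hu)) (Ideal.span_le.2 ?_)
  rintro _ ⟨j, hj, rfl⟩
  refine Ideal.mem_sup_right ?_
  change a j * y ∈ prefixIdeal a n
  rw [central]
  exact Ideal.mul_mem_left _ _ (Ideal.subset_span ⟨j, hj, rfl⟩)

namespace IsRegularSeqMod

/-- Multiplying `z * y = l + w * a n` by `y` shows that `w` again annihilates `y`, so that `w` is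
a multiple of `y` and can be absorbed into `z`. -/
theorem mem_of_mul_mem {I : Ideal E} {a : Fin k → E} (h : IsRegularSeqMod I a)
    (central : ∀ j x, a j * x = x * a j) {y : E} (hIy : ∀ u ∈ I, u * y ∈ I) (hyy : y * y ∈ I)
    (hy : ∀ z, z * y ∈ I → z ∈ I ⊔ Ideal.span {y}) {n : ℕ} (hn : n ≤ k) {z : E}
    (hz : z * y ∈ I ⊔ prefixIdeal a n) : z ∈ I ⊔ prefixIdeal a n ⊔ Ideal.span {y} := by
  induction n generalizing z with
  | zero => simpa [prefixIdeal_zero] using hy z (by simpa [prefixIdeal_zero] using hz)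
  | succ n ih =>
    let j : Fin k := ⟨n, hn⟩
    rw [prefixIdeal_succ a j, ← sup_assoc] at hz ⊢
    obtain ⟨l, hl, _, hw, hzy⟩ := Submodule.mem_sup.1 hz
    obtain ⟨w, rfl⟩ := Ideal.mem_span_singleton'.1 hw
    have w_mul_y_mem : w * y ∈ I ⊔ prefixIdeal a n := by
      refine h j (w * y) ?_
      have : a j * (w * y) = z * (y * y) - l * y := by
        rw [← mul_assoc z, ← hzy, add_mul, add_sub_cancel_left, ← central, mul_assoc]
      rw [this]
      exact sub_mem (Ideal.mem_sup_left (Ideal.mul_mem_left _ _ hyy))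
        (mul_mem_sup_prefixIdeal central hIy hl)
    obtain ⟨κ, hκ, _, ht, rfl⟩ := Submodule.mem_sup.1 (ih (Nat.le_of_succ_le hn) w_mul_y_mem)
    obtain ⟨t, rfl⟩ := Ideal.mem_span_singleton'.1 ht
    have sub_mul_y_mem : (z - t * a j) * y ∈ I ⊔ prefixIdeal a n := by
      have : (z - t * a j) * y = l + a j * κ := by
        rw [sub_mul, ← hzy, ← central, mul_add, ← mul_assoc (a j), central j t]
        abel
      rw [this]
      exact add_mem hl (Ideal.mul_mem_left _ _ hκ)
    rw [sup_right_comm, ← sub_add_cancel z (t * a j)]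
    exact Submodule.add_mem_sup (ih (Nat.le_of_succ_le hn) sub_mul_y_mem)
      (Ideal.mul_mem_left _ _ (Ideal.mem_span_singleton_self _))

theorem sup_span_singleton {I : Ideal E} {a : Fin k → E} (h : IsRegularSeqMod I a)
    (central : ∀ j x, a j * x = x * a j) {y : E} (hIy : ∀ u ∈ I, u * y ∈ I) (hyy : y * y ∈ I)
    (hy : ∀ z, z * y ∈ I → z ∈ I ⊔ Ideal.span {y}) : IsRegularSeqMod (I ⊔ Ideal.span {y}) a := by
  intro j x hx
  rw [sup_right_comm] at hx ⊢
  refine h.mem_of_mul_mem central hIy hyy hy j.is_lt.le (h j (x * y) ?_)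
  obtain ⟨l, hl, _, ht, hax⟩ := Submodule.mem_sup.1 hx
  obtain ⟨t, rfl⟩ := Ideal.mem_span_singleton'.1 ht
  rw [← mul_assoc, ← hax, add_mul, mul_assoc]
  exact add_mem (mul_mem_sup_prefixIdeal central hIy hl)
    (Ideal.mem_sup_left (Ideal.mul_mem_left _ _ hyy))

end IsRegularSeqMod

end RegularModulo

section Contractions

variable (K : Type*) {E : Type} [Field K] [Ring E] [Algebra K E]

/-- A set `O` of odd elements has contractions if every linear form `φ` extends from `O` to an
antiderivation `D`, acting from the right. -/
def HasContractions (O : Set E) : Prop :=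
  ∀ φ : Module.Dual K E, ∃ D : E →ₗ[K] E, ∀ v ∈ O, ∀ u, D (u * v) = φ v • u - D u * v

variable {K} {O : Set E} {k : ℕ} {a : Fin k → E}

theorem HasContractions.mem_sup_span_of_mul_mem (hO : HasContractions K O) {t : Set E}
    (ht : t ⊆ O) {y : E} (hyO : y ∈ O) (hy : y ∉ Submodule.span K t) {z : E}
    (hz : z * y ∈ Ideal.span t) : z ∈ Ideal.span t ⊔ Ideal.span {y} := by
  obtain ⟨φ, hφy, hφt⟩ := Submodule.exists_le_ker_of_notMem hy
  obtain ⟨D, hD⟩ := hO φ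
  have D_mem : ∀ u ∈ Ideal.span t, D u ∈ Ideal.span t := by
    intro u hu
    induction hu using Submodule.closure_induction with
    | zero => simp
    | add u v _ _ hu hv => exact map_add D u v ▸ add_mem hu hv
    | smul_mem c s hs =>
      have φs : φ s = 0 := hφt (Submodule.subset_span hs)
      rw [smul_eq_mul, hD s (ht hs), φs, zero_smul, zero_sub]
      exact neg_mem (Ideal.mul_mem_left _ _ (Ideal.subset_span hs))
  have smul_mem : φ y • z ∈ Ideal.span t ⊔ Ideal.span {y} := by
    rw [← sub_add_cancel (φ y • z) (D z * y), ← hD y hyO]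
    exact add_mem (Ideal.mem_sup_left (D_mem _ hz))
      (Ideal.mem_sup_right (Ideal.mul_mem_left _ _ (Ideal.mem_span_singleton_self y)))
  simpa [smul_smul, inv_mul_cancel₀ hφy] using Submodule.smul_of_tower_mem _ (φ y)⁻¹ smul_mem

theorem HasContractions.isRegularSeqMod_span_finset (hO : HasContractions K O)
    (anticomm : ∀ x ∈ O, ∀ y ∈ O, x * y = -(y * x)) (sq_zero : ∀ x ∈ O, x * x = 0)
    (central : ∀ j x, a j * x = x * a j) (ha : IsRegularSeq a) {t : Finset E} (ht : ↑t ⊆ O) :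
    IsRegularSeqMod (Ideal.span (t : Set E)) a := by
  classical
  induction t using Finset.induction_on with
  | empty => simpa [isRegularSeqMod_bot] using ha
  | insert y t _ ih =>
    rw [Finset.coe_insert, Set.insert_subset_iff] at ht
    obtain ⟨hyO, htO⟩ := ht
    rw [Finset.coe_insert, Set.insert_eq, Ideal.span_union, sup_comm]
    by_cases hy : y ∈ Submodule.span K (t : Set E)
    · have : y ∈ Ideal.span (t : Set E) := Submodule.span_subset_span K E _ hy
      rw [sup_eq_left.2 ((Ideal.span_singleton_le_iff_mem _).2 this)]
      exact ih htO
    · refine (ih htO).sup_span_singleton central (fun u hu => ?_) (by simp [sq_zero y hyO])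
        fun z => hO.mem_sup_span_of_mul_mem htO hyO hy
      induction hu using Submodule.closure_induction with
      | zero => simp
      | add u v _ _ hu hv => exact add_mul u v y ▸ add_mem hu hv
      | smul_mem c s hs =>
        rw [smul_eq_mul, mul_assoc, anticomm s (htO hs) y hyO, mul_neg, ← mul_assoc]
        exact neg_mem (Ideal.mul_mem_left _ _ (Ideal.subset_span hs))

theorem HasContractions.isRegularSeqMod_span (hO : HasContractions K O)
    (anticomm : ∀ x ∈ O, ∀ y ∈ O, x * y = -(y * x)) (sq_zero : ∀ x ∈ O, x * x = 0)
    (central : ∀ j x, a j * x = x * a j) (ha : IsRegularSeq a) :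
    IsRegularSeqMod (Ideal.span O) a := by
  intro j x hx
  obtain ⟨p, hp, l, hl, hpl⟩ := Submodule.mem_sup.1 hx
  obtain ⟨t, htO, hpt⟩ := Submodule.mem_span_finite_of_mem_span hp
  refine sup_le_sup_right (Ideal.span_mono htO) _ <|
    hO.isRegularSeqMod_span_finset anticomm sq_zero central ha htO j x ?_
  exact hpl ▸ Submodule.add_mem_sup hpt hl

end Contractions

theorem finsum_card_fiber {σ κ : Type*} [Finite σ] (f : σ → κ) :
    (∑ᶠ i, Nat.card {x : σ // f x = i}) = Nat.card σ := by
  classical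
  have := Fintype.ofFinite σ
  rw [finsum_eq_sum_of_support_subset (s := Finset.univ.image f)]
  · simp only [Nat.card_eq_fintype_card, Fintype.card_subtype]
    exact (Finset.card_eq_sum_card_fiberwise (by simp [Set.MapsTo])).symm
  · intro i hi
    obtain ⟨x, hx⟩ := (Nat.card_ne_zero.1 hi).1
    simpa using ⟨x, hx⟩

namespace CDGA

variable {A : CDGA}

theorem induction_on_homogeneous {motive : A.carrier → Prop} (u : A.carrier) (zero : motive 0)
    (add : ∀ u v, motive u → motive v → motive (u + v))
    (homogeneous : ∀ i, ∀ u ∈ A.grading i, motive u) : motive u := by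
  have hu : u ∈ ⨆ i, A.grading i := A.internal.submodule_iSup_eq_top ▸ Submodule.mem_top
  exact Submodule.iSup_induction A.grading (motive := motive) hu homogeneous zero add

theorem mul_comm_of_even {i : ℤ} (hi : Even i) {x : A.carrier} (hx : x ∈ A.grading i)
    (y : A.carrier) : x * y = y * x := by
  induction y using induction_on_homogeneous with
  | zero => simp
  | add u v hu hv => rw [mul_add, add_mul, hu, hv]
  | homogeneous j y hy => rw [A.gcomm hx hy, (hi.mul_right j).neg_one_zpow, one_smul]

theorem mul_eq_neg_of_odd {i j : ℤ} (hi : Odd i) (hj : Odd j) {x y : A.carrier}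
    (hx : x ∈ A.grading i) (hy : y ∈ A.grading j) : x * y = -(y * x) := by
  rw [A.gcomm hx hy, (hi.mul hj).neg_one_zpow, neg_one_smul]

theorem mul_self_of_odd {i : ℤ} (hi : Odd i) {x : A.carrier} (hx : x ∈ A.grading i) :
    x * x = 0 := by
  have two_smul_eq_zero : (2 : ℚ) • (x * x) = 0 := by
    rw [two_smul]
    exact add_eq_zero_iff_eq_neg.2 (mul_eq_neg_of_odd hi hi hx hx)
  simpa using two_smul_eq_zero

theorem koszulCommuting {ι : Type*} {deg : ι → ℤ} {g : ι → A.carrier}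
    (hg : ∀ x, g x ∈ A.grading (deg x)) : KoszulCommuting deg g where
  even_comm x hx y := mul_comm_of_even hx (hg x) (g y)
  odd_anticomm x y hx hy := mul_eq_neg_of_odd hx hy (hg x) (hg y)
  odd_sq x hx := mul_self_of_odd hx (hg x)

theorem d_one : A.d 1 = 0 := by
  simpa using A.leibniz A.one_mem 1

/-- By the Leibniz rule the elements killed by `q ∘ d` are closed under multiplication by
homogeneous elements killed by `q ∘ d`. -/
theorem map_d_eq_zero_of_mem_adjoin {B : Type*} [Ring B] [Algebra ℚ B] (q : A.carrier →ₐ[ℚ] B)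
    {S : Set A.carrier} (hS : ∀ s ∈ S, (∃ i, s ∈ A.grading i) ∧ q (A.d s) = 0) {u : A.carrier}
    (hu : u ∈ Algebra.adjoin ℚ S) : q (A.d u) = 0 := by
  refine adjoin_le_of_mul_mem_left (N := LinearMap.ker (q.toLinearMap ∘ₗ A.d)) ?_ ?_ hu
  · simp [d_one]
  · intro s hs u hu
    obtain ⟨⟨i, hi⟩, hds⟩ := hS s hs
    have hdu : q (A.d u) = 0 := hu
    simp [A.leibniz hi, hds, hdu]

theorem mul_mem_span_posSet {i : ℤ} (hi : 0 < i) {x : A.carrier} (hx : x ∈ A.grading i)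
    (u : A.carrier) : x * u ∈ Submodule.span ℚ A.posSet := by
  induction u using induction_on_homogeneous with
  | zero => simp
  | add u v hu hv => exact mul_add x u v ▸ add_mem hu hv
  | homogeneous j u hu =>
    rcases lt_or_ge j 0 with hj | hj
    · rw [A.nonneg j hj, Submodule.mem_bot] at hu
      simp [hu]
    · exact Submodule.subset_span ⟨i + j, by omega, A.mul_mem hx hu⟩

theorem disjoint_grading_zero_span_posSet :
    Disjoint (A.grading 0) (Submodule.span ℚ A.posSet) := by
  refine (A.internal.submodule_iSupIndep 0).mono_right (Submodule.span_le.2 ?_)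
  rintro u ⟨i, hi, hu⟩
  exact Submodule.mem_iSup_of_mem i (Submodule.mem_iSup_of_mem hi.ne' hu)

end CDGA

namespace SullivanAlgebra

variable {A : SullivanAlgebra}

/-- A homogeneous basis of the space of generators of a Sullivan algebra, as provided by the field
`SullivanAlgebra.free`. -/
structure FreeBasis (A : SullivanAlgebra) where
  ι : Type
  lo : LinearOrder ι
  deg : ι → ℤ
  gen : ι → A.carrier
  gen_mem : ∀ x, gen x ∈ A.V (deg x)
  V_eq_span : ∀ i, A.V i = Submodule.span ℚ (gen '' {x | deg x = i})
  linearIndependent_monomialIn : LinearIndependent ℚ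
    fun e : {e : ι →₀ ℕ // ∀ x, Odd (deg x) → e x ≤ 1} => monomialIn lo gen e.1
  adjoin_eq_top : Algebra.adjoin ℚ (Set.range gen) = ⊤

theorem nonempty_freeBasis (A : SullivanAlgebra) : Nonempty A.FreeBasis := by
  obtain ⟨ι, lo, deg, gen, gen_mem, V_eq_span, indep, span_eq_top⟩ := A.free
  refine ⟨⟨ι, lo, deg, gen, gen_mem, V_eq_span, indep, ?_⟩⟩
  rw [← Algebra.toSubmodule_eq_top, eq_top_iff]
  refine span_eq_top.trans (Submodule.span_le.2 ?_)
  rintro _ ⟨e, rfl⟩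
  refine Subalgebra.list_prod_mem _ fun u hu => ?_
  obtain ⟨x, _, rfl⟩ := List.mem_map.1 hu
  exact pow_mem (Algebra.subset_adjoin (Set.mem_range_self x)) _

namespace FreeBasis

variable (F : A.FreeBasis)

theorem gen_mem_grading (x : F.ι) : F.gen x ∈ A.grading (F.deg x) :=
  A.V_le _ (F.gen_mem x)

theorem exists_algHom {B : Type} [Ring B] [Algebra ℚ B] {γ : F.ι → B}
    (hγ : KoszulCommuting F.deg γ) : ∃ Φ : A.carrier →ₐ[ℚ] B, ∀ x, Φ (F.gen x) = γ x :=
  (CDGA.koszulCommuting F.gen_mem_grading).exists_algHom hγ F.lo F.linearIndependent_monomialIn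
    F.adjoin_eq_top

theorem linearIndependent_gen : LinearIndependent ℚ F.gen := by
  classical
  let single : F.ι → {e : F.ι →₀ ℕ // ∀ x, Odd (F.deg x) → e x ≤ 1} := fun x =>
    ⟨Finsupp.single x 1, fun y _ => by rw [Finsupp.single_apply]; split_ifs <;> simp⟩
  have single_injective : Function.Injective single := fun x y h =>
    Finsupp.single_left_injective one_ne_zero (congrArg Subtype.val h)
  have monomialIn_single : ∀ x, monomialIn F.lo F.gen (single x).1 = F.gen x := by
    intro x
    simp [single, monomialIn]
  convert F.linearIndependent_monomialIn.comp single single_injective using 1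
  exact (funext monomialIn_single).symm

theorem V_le_of_gen_mem {i : ℤ} {N : Submodule ℚ A.carrier}
    (h : ∀ x, F.deg x = i → F.gen x ∈ N) : A.V i ≤ N := by
  rw [F.V_eq_span, Submodule.span_le]
  rintro _ ⟨x, hx, rfl⟩
  exact h x hx

/-- The polynomial algebra on the generators of even degree. -/
abbrev EvenPoly : Type := MvPolynomial {x : F.ι // Even (F.deg x)} ℚ

theorem exists_evenProj : ∃ Φ : A.carrier →ₐ[ℚ] F.EvenPoly,
    ∀ x, Φ (F.gen x) = if hx : Even (F.deg x) then MvPolynomial.X ⟨x, hx⟩ else 0 := by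
  refine F.exists_algHom ⟨fun x _ y => mul_comm _ _, fun x y hx _ => ?_, fun x hx => ?_⟩ <;>
    simp [Int.not_even_iff_odd.2 hx]

/-- The projection of a Sullivan algebra onto the polynomial algebra on its even generators. -/
noncomputable def evenProj : A.carrier →ₐ[ℚ] F.EvenPoly :=
  F.exists_evenProj.choose

theorem evenProj_gen_even (x : {x : F.ι // Even (F.deg x)}) :
    F.evenProj (F.gen x) = MvPolynomial.X x :=
  (F.exists_evenProj.choose_spec x).trans (dif_pos x.2)

theorem evenProj_of_odd {i : ℤ} (hi : Odd i) {v : A.carrier} (hv : v ∈ A.V i) :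
    F.evenProj v = 0 := by
  refine F.V_le_of_gen_mem (N := LinearMap.ker F.evenProj.toLinearMap) (fun x hx => ?_) hv
  exact (F.exists_evenProj.choose_spec x).trans (dif_neg (Int.not_even_iff_odd.2 (hx ▸ hi)))

theorem gen_mem_center (x : {x : F.ι // Even (F.deg x)}) :
    F.gen x ∈ Subalgebra.center ℚ A.carrier :=
  Subalgebra.mem_center_iff.2 fun u =>
    (CDGA.mul_comm_of_even x.2 (F.gen_mem_grading x) u).symm

/-- The inclusion of the polynomial algebra on the even generators, which are central. -/
noncomputable def evenIncl : F.EvenPoly →ₐ[ℚ] A.carrier :=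
  (Subalgebra.center ℚ A.carrier).val.comp
    (MvPolynomial.aeval fun x => (⟨F.gen x, F.gen_mem_center x⟩ : Subalgebra.center ℚ A.carrier))

theorem evenIncl_X (x : {x : F.ι // Even (F.deg x)}) :
    F.evenIncl (MvPolynomial.X x) = F.gen x := by
  simp [evenIncl]

theorem evenIncl_mul_comm (p : F.EvenPoly) (u : A.carrier) :
    F.evenIncl p * u = u * F.evenIncl p :=
  (Subalgebra.mem_center_iff.1 (SetLike.coe_mem _) u).symm

theorem evenProj_evenIncl (p : F.EvenPoly) : F.evenProj (F.evenIncl p) = p := by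
  suffices F.evenProj.comp F.evenIncl = AlgHom.id ℚ _ from DFunLike.congr_fun this p
  ext x
  simp [evenIncl_X, evenProj_gen_even]

theorem evenIncl_evenProj_of_even {i : ℤ} (hi : Even i) {v : A.carrier} (hv : v ∈ A.V i) :
    F.evenIncl (F.evenProj v) = v := by
  refine F.V_le_of_gen_mem (N := LinearMap.eqLocus
    (F.evenIncl.comp F.evenProj).toLinearMap LinearMap.id) (fun x hx => ?_) hv
  have hx' : Even (F.deg x) := hx ▸ hi
  exact (congrArg F.evenIncl (F.evenProj_gen_even ⟨x, hx'⟩)).trans (F.evenIncl_X ⟨x, hx'⟩)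

theorem range_evenIncl :
    F.evenIncl.range = Algebra.adjoin ℚ {u | ∃ i, Even i ∧ u ∈ A.V i} := by
  apply le_antisymm
  · rw [← Algebra.map_top, ← MvPolynomial.adjoin_range_X, AlgHom.map_adjoin]
    refine Algebra.adjoin_mono ?_
    rintro _ ⟨_, ⟨x, rfl⟩, rfl⟩
    exact ⟨F.deg x, x.2, F.evenIncl_X x ▸ F.gen_mem x⟩
  · rw [Algebra.adjoin_le_iff]
    rintro v ⟨i, hi, hv⟩
    exact ⟨F.evenProj v, F.evenIncl_evenProj_of_even hi hv⟩

theorem constantCoeff_evenProj_gen (x : F.ι) :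
    MvPolynomial.constantCoeff (F.evenProj (F.gen x)) = 0 := by
  rcases Int.even_or_odd (F.deg x) with hx | hx
  · simp [F.evenProj_gen_even ⟨x, hx⟩]
  · simp [F.evenProj_of_odd hx (F.gen_mem x)]

theorem gen_mul_mem_span_posSet (x : F.ι) (u : A.carrier) :
    F.gen x * u ∈ Submodule.span ℚ A.posSet := by
  rcases le_or_gt (F.deg x) 1 with hx | hx
  · have : F.gen x = 0 := (Submodule.mem_bot ℚ).1 (A.V_lower _ hx ▸ F.gen_mem x)
    simp [this]
  · exact CDGA.mul_mem_span_posSet (zero_lt_one.trans hx) (F.gen_mem_grading x) u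

theorem sub_constantCoeff_mem_span_posSet (u : A.carrier) :
    u - algebraMap ℚ _ (MvPolynomial.constantCoeff (F.evenProj u)) ∈
      Submodule.span ℚ A.posSet := by
  let aug : A.carrier →ₐ[ℚ] ℚ := (MvPolynomial.aeval 0).comp F.evenProj
  have aug_apply : ∀ u, aug u = MvPolynomial.constantCoeff (F.evenProj u) := fun u => by
    simp [aug]
  rw [← aug_apply]
  have hu : u ∈ Algebra.adjoin ℚ (Set.range F.gen) := F.adjoin_eq_top ▸ Algebra.mem_top
  refine adjoin_le_of_mul_mem_left (N := (Submodule.span ℚ A.posSet).comap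
    (LinearMap.id - Algebra.linearMap ℚ A.carrier ∘ₗ aug.toLinearMap)) ?_ ?_ hu
  · simp
  · rintro _ ⟨x, rfl⟩ u _
    have aug_gen : aug (F.gen x) = 0 := by rw [aug_apply, F.constantCoeff_evenProj_gen]
    simpa [aug_gen] using F.gen_mul_mem_span_posSet x u

theorem constantCoeff_evenProj_eq_zero {i : ℤ} (hi : 0 < i) {u : A.carrier}
    (hu : u ∈ A.grading i) : MvPolynomial.constantCoeff (F.evenProj u) = 0 := by
  set c := MvPolynomial.constantCoeff (F.evenProj u)
  have algebraMap_mem_pos : algebraMap ℚ A.carrier c ∈ Submodule.span ℚ A.posSet := by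
    have hu : u ∈ Submodule.span ℚ A.posSet := Submodule.subset_span ⟨i, hi, hu⟩
    simpa using sub_mem hu (F.sub_constantCoeff_mem_span_posSet u)
  have algebraMap_mem_zero : algebraMap ℚ A.carrier c ∈ A.grading 0 := by
    rw [Algebra.algebraMap_eq_smul_one]
    exact Submodule.smul_mem _ c A.one_mem
  have algebraMap_eq_zero := Submodule.disjoint_def.1 CDGA.disjoint_grading_zero_span_posSet _
    algebraMap_mem_zero algebraMap_mem_pos
  simpa using congrArg (fun v => MvPolynomial.constantCoeff (F.evenProj v)) algebraMap_eq_zero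

theorem finrank_V {i : ℤ} (hi : Even i) : Module.finrank ℚ (A.V i) =
    Nat.card {x : {x : F.ι // Even (F.deg x)} // F.deg x = i} := by
  have image_eq_range : F.gen '' {x | F.deg x = i} =
      Set.range fun x : {x : {x : F.ι // Even (F.deg x)} // F.deg x = i} => F.gen x := by
    ext v
    constructor
    · rintro ⟨x, rfl, rfl⟩
      exact ⟨⟨⟨x, hi⟩, rfl⟩, rfl⟩
    · rintro ⟨x, rfl⟩
      exact ⟨x, x.2, rfl⟩
  have indep : LinearIndependent ℚ
      fun x : {x : {x : F.ι // Even (F.deg x)} // F.deg x = i} => F.gen x :=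
    F.linearIndependent_gen.comp _ (Subtype.val_injective.comp Subtype.val_injective)
  rw [F.V_eq_span, image_eq_range]
  exact Module.finrank_eq_nat_card_basis (Module.Basis.span indep)

theorem evenDim_eq_card [Finite {x : F.ι // Even (F.deg x)}] :
    A.evenDim = Nat.card {x : F.ι // Even (F.deg x)} := by
  have finrank_eq : ∀ i : ℤ, (if Even i then Module.finrank ℚ (A.V i) else 0) =
      Nat.card {x : {x : F.ι // Even (F.deg x)} // F.deg x = i} := by
    intro i
    split_ifs with hi
    · exact F.finrank_V hi
    · have : IsEmpty {x : {x : F.ι // Even (F.deg x)} // F.deg x = i} :=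
        ⟨fun x => hi (x.2 ▸ x.1.2)⟩
      simp
  rw [evenDim, finsum_congr finrank_eq, finsum_card_fiber]

open Classical in
/-- Upper triangular matrices with diagonal `(v, ±v)`: multiplicativity of the homomorphism
extending this family says that its upper right entry is the contraction by `φ`. -/
noncomputable def contractionMatrix (φ : Module.Dual ℚ A.carrier) (x : F.ι) :
    Matrix (Fin 2) (Fin 2) A.carrier :=
  if Even (F.deg x) then !![F.gen x, 0; 0, F.gen x]
  else !![F.gen x, φ (F.gen x) • 1; 0, -F.gen x]

theorem contractionMatrix_of_even (φ : Module.Dual ℚ A.carrier) {x : F.ι} (hx : Even (F.deg x)) :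
    F.contractionMatrix φ x = !![F.gen x, 0; 0, F.gen x] :=
  if_pos hx

theorem contractionMatrix_of_odd (φ : Module.Dual ℚ A.carrier) {x : F.ι} (hx : Odd (F.deg x)) :
    F.contractionMatrix φ x = !![F.gen x, φ (F.gen x) • 1; 0, -F.gen x] :=
  if_neg (Int.not_even_iff_odd.2 hx)

theorem koszulCommuting_contractionMatrix (φ : Module.Dual ℚ A.carrier) :
    KoszulCommuting F.deg (F.contractionMatrix φ) where
  even_comm x hx y := by
    have comm := CDGA.mul_comm_of_even hx (F.gen_mem_grading x) (F.gen y)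
    rcases Int.even_or_odd (F.deg y) with hy | hy
    · simp [F.contractionMatrix_of_even φ hx, F.contractionMatrix_of_even φ hy, comm]
    · simp [F.contractionMatrix_of_even φ hx, F.contractionMatrix_of_odd φ hy, comm]
  odd_anticomm x y hx hy := by
    have anticomm := CDGA.mul_eq_neg_of_odd hx hy (F.gen_mem_grading x) (F.gen_mem_grading y)
    rw [F.contractionMatrix_of_odd φ hx, F.contractionMatrix_of_odd φ hy]
    simp [anticomm, add_comm]
  odd_sq x hx := by
    have sq := CDGA.mul_self_of_odd hx (F.gen_mem_grading x)
    simp [F.contractionMatrix_of_odd φ hx, sq, ← Matrix.ext_iff]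

end FreeBasis

theorem exists_contraction (φ : Module.Dual ℚ A.carrier) : ∃ D : A.carrier →ₗ[ℚ] A.carrier,
    D 1 = 0 ∧ (∀ i, Odd i → ∀ v ∈ A.V i, ∀ u, D (u * v) = φ v • u - D u * v) ∧
      ∀ i, Even i → ∀ v ∈ A.V i, ∀ u, D (u * v) = D u * v := by
  obtain ⟨F⟩ := A.nonempty_freeBasis
  obtain ⟨Φ, hΦ⟩ := F.exists_algHom (F.koszulCommuting_contractionMatrix φ)
  have Φ_gen : ∀ x, Φ (F.gen x) 0 0 = F.gen x ∧ Φ (F.gen x) 1 0 = 0 := by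
    intro x
    rw [hΦ]
    rcases Int.even_or_odd (F.deg x) with hx | hx
    · simp [F.contractionMatrix_of_even φ hx]
    · simp [F.contractionMatrix_of_odd φ hx]
  have Φ_apply_zero_zero : ∀ u, Φ u 0 0 = u := by
    intro u
    have hu : u ∈ Algebra.adjoin ℚ (Set.range F.gen) := F.adjoin_eq_top ▸ Algebra.mem_top
    refine adjoin_le_of_mul_mem_right (N := LinearMap.eqLocus
      (Matrix.entryLinearMap ℚ A.carrier 0 0 ∘ₗ Φ.toLinearMap) LinearMap.id) ?_ ?_ hu
    · simp
    · rintro _ ⟨x, rfl⟩ u hu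
      have hu : Φ u 0 0 = u := hu
      simp [Matrix.mul_apply, Φ_gen, hu]
  refine ⟨Matrix.entryLinearMap ℚ A.carrier 0 1 ∘ₗ Φ.toLinearMap, by simp, ?_, ?_⟩ <;>
    intro i hi v hv u <;> rw [F.V_eq_span] at hv <;>
    induction hv using Submodule.span_induction with
    | zero => simp
    | add v w _ _ hv hw => simp only [mul_add, map_add, hv, hw, add_smul]; try abel
    | smul c v _ hv => simp [hv, smul_sub, smul_smul]
    | mem v hv =>
      obtain ⟨x, rfl, rfl⟩ := hv
      simp [Matrix.mul_apply, hΦ, Φ_apply_zero_zero, hi, F.contractionMatrix_of_odd,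
        F.contractionMatrix_of_even, sub_eq_add_neg]

/-- The subalgebra `ΛW` generated by a graded subspace `W`. -/
abbrev freeOn {C : Type} [Ring C] [Algebra ℚ C] (W : ℤ → Submodule ℚ C) : Subalgebra ℚ C :=
  Algebra.adjoin ℚ (⋃ i, (W i : Set C))

/-- The subalgebra `ΛW^even` generated by the even part of a graded subspace `W`. -/
abbrev freeOnEven {C : Type} [Ring C] [Algebra ℚ C] (W : ℤ → Submodule ℚ C) : Subalgebra ℚ C :=
  Algebra.adjoin ℚ {x : C | ∃ i, Even i ∧ x ∈ W i}

variable {W : ℤ → Submodule ℚ A.carrier}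

theorem hasContractions_odd (hW : ∀ i, W i ≤ A.V i) :
    HasContractions ℚ {x : freeOn W | ∃ i, Odd i ∧ (x : A.carrier) ∈ W i} := by
  intro φ
  obtain ⟨φ', hφ'⟩ := LinearMap.exists_extend (p := Subalgebra.toSubmodule (freeOn W)) φ
  obtain ⟨D, D_one, D_odd, D_even⟩ := exists_contraction φ'
  have D_mem : ∀ u ∈ freeOn W, D u ∈ freeOn W := by
    suffices Subalgebra.toSubmodule (freeOn W) ≤
        (Subalgebra.toSubmodule (freeOn W)).comap D ⊓ Subalgebra.toSubmodule (freeOn W) from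
      fun u hu => (this hu).1
    refine adjoin_le_of_mul_mem_right ?_ fun v hv u ⟨hDu, hu⟩ => ?_
    · simp [D_one]
    · have hvW : v ∈ freeOn W := Algebra.subset_adjoin hv
      obtain ⟨i, hi⟩ := Set.mem_iUnion.1 hv
      refine ⟨?_, (freeOn W).mul_mem hu hvW⟩
      change D (u * v) ∈ freeOn W
      rcases Int.even_or_odd i with h | h
      · rw [D_even i h v (hW i hi)]
        exact mul_mem hDu hvW
      · rw [D_odd i h v (hW i hi)]
        exact sub_mem (Subalgebra.smul_mem _ hu _) (mul_mem hDu hvW)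
  refine ⟨LinearMap.restrict (p := Subalgebra.toSubmodule (freeOn W))
    (q := Subalgebra.toSubmodule (freeOn W)) D D_mem, ?_⟩
  rintro v ⟨i, hi, hv⟩ u
  have φ'_apply : φ' v = φ v := DFunLike.congr_fun hφ' v
  exact Subtype.ext (φ'_apply ▸ D_odd i hi v (hW i hv) u)

namespace FreeBasis

variable (F : A.FreeBasis)

theorem evenIncl_evenProj_mem (hW : ∀ i, W i ≤ A.V i) (u : freeOn W) :
    F.evenIncl (F.evenProj u) ∈ freeOnEven W := by
  suffices freeOn W ≤ (freeOnEven W).comap (F.evenIncl.comp F.evenProj) from this u.2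
  refine Algebra.adjoin_le fun v hv => ?_
  obtain ⟨i, hi⟩ := Set.mem_iUnion.1 hv
  rcases Int.even_or_odd i with h | h
  · have := F.evenIncl_evenProj_of_even h (hW i hi)
    exact Algebra.subset_adjoin ⟨i, h, this.symm ▸ hi⟩
  · simp [F.evenProj_of_odd h (hW i hi)]

/-- The projection `ΛW → ΛW^even` that kills the generators of odd degree. -/
noncomputable def evenPart (hW : ∀ i, W i ≤ A.V i) : freeOn W →ₐ[ℚ] freeOnEven W :=
  ((F.evenIncl.comp F.evenProj).comp (freeOn W).val).codRestrict _ (F.evenIncl_evenProj_mem hW)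

theorem coe_evenPart (hW : ∀ i, W i ≤ A.V i) (u : freeOn W) :
    (F.evenPart hW u : A.carrier) = F.evenIncl (F.evenProj u) :=
  rfl

theorem evenIncl_evenProj_of_mem_freeOnEven (hW : ∀ i, W i ≤ A.V i) {u : A.carrier}
    (hu : u ∈ freeOnEven W) : F.evenIncl (F.evenProj u) = u := by
  suffices freeOnEven W ≤ AlgHom.equalizer (F.evenIncl.comp F.evenProj) (AlgHom.id ℚ _) from this hu
  refine Algebra.adjoin_le ?_
  rintro v ⟨i, hi, hv⟩
  exact F.evenIncl_evenProj_of_even hi (hW i hv)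

theorem freeOnEven_le_freeOn : freeOnEven W ≤ freeOn W :=
  Algebra.adjoin_mono fun _ ⟨i, _, hv⟩ => Set.mem_iUnion_of_mem i hv

theorem evenPart_surjective (hW : ∀ i, W i ≤ A.V i) : Function.Surjective (F.evenPart hW) :=
  fun u => ⟨⟨u, freeOnEven_le_freeOn u.2⟩,
    Subtype.ext (F.evenIncl_evenProj_of_mem_freeOnEven hW u.2)⟩

theorem sub_evenPart_mem_span (hW : ∀ i, W i ≤ A.V i) (u : freeOn W) :
    u - Subalgebra.inclusion freeOnEven_le_freeOn (F.evenPart hW u) ∈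
      Ideal.span {x : freeOn W | ∃ i, Odd i ∧ (x : A.carrier) ∈ W i} := by
  set ρ := (Subalgebra.inclusion freeOnEven_le_freeOn).comp (F.evenPart hW) with hρ
  set O := {x : freeOn W | ∃ i, Odd i ∧ (x : A.carrier) ∈ W i}
  have ρ_comm : ∀ u v, ρ u * v = v * ρ u := fun u v =>
    Subtype.ext (F.evenIncl_mul_comm (F.evenProj u) v)
  have sub_mem_of_mem : ∀ v : freeOn W, (v : A.carrier) ∈ ⋃ i, (W i : Set A.carrier) →
      v - ρ v ∈ Ideal.span O := by
    intro v hv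
    obtain ⟨i, hi⟩ := Set.mem_iUnion.1 hv
    rcases Int.even_or_odd i with h | h
    · have ρ_eq : ρ v = v := Subtype.ext (F.evenIncl_evenProj_of_even h (hW i hi))
      simp [ρ_eq]
    · have ρ_eq : ρ v = 0 := by
        simp [hρ, Subtype.ext_iff, coe_evenPart, F.evenProj_of_odd h (hW i hi)]
      rw [ρ_eq, sub_zero]
      exact Ideal.subset_span ⟨i, h, hi⟩
  have hu : u ∈ Algebra.adjoin ℚ ((↑) ⁻¹' ⋃ i, (W i : Set A.carrier)) := by
    rw [Algebra.adjoin_adjoin_coe_preimage]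
    exact Algebra.mem_top
  refine adjoin_le_of_mul_mem_left (N := (Submodule.restrictScalars ℚ (Ideal.span O)).comap
    (LinearMap.id - ρ.toLinearMap)) ?_ (fun v hv u hu => ?_) hu
  · simp
  · have : v * u - ρ (v * u) = v * (u - ρ u) + ρ u * (v - ρ v) := by
      rw [map_mul, mul_sub, mul_sub, ρ_comm u v, ρ_comm u (ρ v)]
      abel
    change v * u - ρ (v * u) ∈ Ideal.span O
    rw [this]
    exact add_mem (Ideal.mul_mem_left _ _ hu) (Ideal.mul_mem_left _ _ (sub_mem_of_mem v hv))

theorem ker_evenPart (hW : ∀ i, W i ≤ A.V i) : RingHom.ker (F.evenPart hW) =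
    Ideal.span {x : freeOn W | ∃ i, Odd i ∧ (x : A.carrier) ∈ W i} := by
  apply le_antisymm
  · intro u hu
    simpa [(RingHom.mem_ker).1 hu] using F.sub_evenPart_mem_span hW u
  · rw [Ideal.span_le]
    rintro v ⟨i, hi, hv⟩
    refine (RingHom.mem_ker).2 (Subtype.ext ?_)
    simp [coe_evenPart, F.evenProj_of_odd hi (hW i hv)]

theorem isRegularSeq_evenPart (hW : ∀ i, W i ≤ A.V i) {k : ℕ} {a : Fin k → freeOn W}
    (central : ∀ j x, a j * x = x * a j) (ha : IsRegularSeq a) :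
    IsRegularSeq (F.evenPart hW ∘ a) := by
  refine (isRegularSeqMod_ker_iff (f := (F.evenPart hW).toRingHom) (F.evenPart_surjective hW)).1 ?_
  have : RingHom.ker (F.evenPart hW).toRingHom = _ := F.ker_evenPart hW
  rw [this]
  refine (hasContractions_odd hW).isRegularSeqMod_span ?_ ?_ central ha
  · rintro x ⟨i, hi, hx⟩ y ⟨j, hj, hy⟩
    exact Subtype.ext (CDGA.mul_eq_neg_of_odd hi hj (A.V_le i (hW i hx)) (A.V_le j (hW j hy)))
  · rintro x ⟨i, hi, hx⟩
    exact Subtype.ext (CDGA.mul_self_of_odd hi (A.V_le i (hW i hx)))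

theorem evenPart_eq_of_sub_mem (hW : ∀ i, W i ≤ A.V i) {u : freeOn W} {v : freeOnEven W}
    (h : (u : A.carrier) - v ∈ Ideal.span {x : A.carrier | ∃ i, Odd i ∧ x ∈ W i}) :
    F.evenPart hW u = v := by
  have evenProj_sub : F.evenProj ((u : A.carrier) - v) = 0 := by
    refine (RingHom.mem_ker).1 ((Ideal.span_le (I := RingHom.ker F.evenProj)).2 ?_ h)
    rintro x ⟨i, hi, hx⟩
    exact F.evenProj_of_odd hi (hW i hx)
  rw [map_sub, sub_eq_zero] at evenProj_sub
  refine Subtype.ext ?_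
  rw [coe_evenPart, evenProj_sub, F.evenIncl_evenProj_of_mem_freeOnEven hW v.2]

end FreeBasis

end SullivanAlgebra

section KrullDimension

open RingTheory.Sequence in
theorem IsRegularSeq.isWeaklyRegular_ofFn {R : Type} [CommRing R] {k : ℕ} {a : Fin k → R}
    (ha : IsRegularSeq a) : IsWeaklyRegular R (List.ofFn a) := by
  refine ⟨fun i hi => ?_⟩
  obtain ⟨j, rfl⟩ : ∃ j : Fin k, (j : ℕ) = i := ⟨⟨i, by simpa using hi⟩, rfl⟩
  have ofList_take : Ideal.ofList ((List.ofFn a).take j) = Ideal.span (a '' {j' | j' < j}) := by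
    rw [← Fin.ofFn_take_eq_take_ofFn j.is_lt.le, Ideal.ofList]
    congr 1
    ext x
    simp only [List.mem_ofFn, Set.mem_ofPred_eq, Set.mem_image]
    exact ⟨fun ⟨i, hi⟩ => ⟨_, i.is_lt, hi⟩, fun ⟨i, hij, hi⟩ => ⟨⟨i, hij⟩, hi⟩⟩
  rw [isSMulRegular_quotient_iff_mem_of_smul_mem, ofList_take]
  simpa using ha j

theorem IsRegularSeq.le_height {R : Type} [CommRing R] [IsNoetherianRing R] {k : ℕ}
    {a : Fin k → R} (ha : IsRegularSeq a) (p : Ideal R) [p.IsPrime] (hp : ∀ j, a j ∈ p) :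
    (k : ℕ∞) ≤ p.height := by
  let Rₚ := Localization.AtPrime p
  have regular := ha.isWeaklyRegular_ofFn.isRegular_of_isLocalization_of_mem Rₚ p
    ((List.forall_mem_ofFn_iff).2 hp)
  have dim_eq := ringKrullDim_add_length_eq_ringKrullDim_of_isRegular _ regular
  rw [IsLocalization.AtPrime.ringKrullDim_eq_height p Rₚ, List.length_map, List.length_ofFn]
    at dim_eq
  have : Nontrivial (Rₚ ⧸ Ideal.ofList ((List.ofFn a).map (algebraMap R Rₚ))) :=
    Ideal.Quotient.nontrivial_iff.2 fun h => regular.top_ne_smul (by rw [h, Submodule.top_smul])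
  have k_le : (k : WithBot ℕ∞) ≤ p.height :=
    dim_eq ▸ le_add_of_nonneg_left ringKrullDim_nonneg_of_nontrivial
  exact_mod_cast k_le

theorem height_le_of_isArtinianRing_quotient {R : Type*} [CommRing R] [IsNoetherianRing R] {k : ℕ}
    {a : Fin k → R} [IsArtinianRing (R ⧸ Ideal.span (Set.range a))] (p : Ideal R) [p.IsPrime]
    (hp : ∀ j, a j ∈ p) : p.height ≤ (k : ℕ∞) := by
  have dim_le : ringKrullDim (R ⧸ Ideal.span (Set.range a)) ≤ 0 :=
    Ring.krullDimLE_iff.1 inferInstance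
  have encard_le : (Set.range a).encard ≤ k := by
    simpa [Set.image_univ] using Set.encard_image_le a Set.univ
  have height_le : (p.height : WithBot ℕ∞) ≤ 0 + (k : ℕ∞) :=
    (Ideal.height_le_ringKrullDim_quotient_add_encard _ (Set.range_subset_iff.2 hp)).trans
      (add_le_add dim_le (WithBot.coe_le_coe.2 encard_le))
  rw [zero_add] at height_le
  exact_mod_cast height_le

variable {σ R : Type*} [CommRing R]

open Classical in
/-- The substitution of `0` for the variables in `s`. -/
noncomputable def killVars (R : Type*) [CommRing R] (s : Set σ) :
    MvPolynomial σ R →ₐ[R] MvPolynomial σ R :=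
  MvPolynomial.aeval fun x => if x ∈ s then 0 else MvPolynomial.X x

theorem killVars_X_of_mem {s : Set σ} {x : σ} (hx : x ∈ s) :
    killVars R s (MvPolynomial.X x) = 0 := by
  rw [killVars, MvPolynomial.aeval_X, if_pos hx]

theorem killVars_X_of_notMem {s : Set σ} {x : σ} (hx : x ∉ s) :
    killVars R s (MvPolynomial.X x) = MvPolynomial.X x := by
  rw [killVars, MvPolynomial.aeval_X, if_neg hx]

theorem killVars_comp_killVars {s t : Set σ} (hst : s ⊆ t) :
    (killVars R t).comp (killVars R s) = killVars R t := by
  ext1 x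
  rw [AlgHom.comp_apply]
  by_cases hx : x ∈ s
  · rw [killVars_X_of_mem hx, killVars_X_of_mem (hst hx), map_zero]
  · rw [killVars_X_of_notMem hx]

theorem ker_killVars_lt_insert [Nontrivial R] {s : Set σ} {x : σ} (hx : x ∉ s) :
    RingHom.ker (killVars R s) < RingHom.ker (killVars R (insert x s)) := by
  refine SetLike.lt_iff_le_and_exists.2 ⟨fun p hp => ?_, MvPolynomial.X x, ?_, ?_⟩
  · rw [RingHom.mem_ker] at hp ⊢
    rw [← killVars_comp_killVars (Set.subset_insert x s), AlgHom.comp_apply, hp, map_zero]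
  · exact killVars_X_of_mem (Set.mem_insert x s)
  · rw [RingHom.mem_ker, killVars_X_of_notMem hx]
    exact MvPolynomial.X_ne_zero x

theorem card_le_height_ker_killVars [IsDomain R] (s : Finset σ) :
    (s.card : ℕ∞) ≤ (RingHom.ker (killVars R (s : Set σ))).height := by
  classical
  induction s using Finset.induction_on with
  | empty => simp
  | insert x s hx ih =>
    have := RingHom.ker_isPrime (killVars R (s : Set σ))
    have := RingHom.ker_isPrime (killVars R (↑(insert x s) : Set σ))
    rw [Finset.card_insert_of_notMem hx, Nat.cast_succ]
    refine (add_le_add_left ih 1).trans (Ideal.height_add_one_le_of_lt_of_isPrime ?_)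
    rw [Finset.coe_insert]
    exact ker_killVars_lt_insert (mod_cast hx)

theorem killVars_eq_C {s : Set σ} {p : MvPolynomial σ R} (hp : ↑p.vars ⊆ s) :
    killVars R s p = MvPolynomial.C (MvPolynomial.constantCoeff p) :=
  MvPolynomial.aeval_eq_constantCoeff_of_vars fun _ hx => if_pos (hp hx)

variable {K : Type*} [Field K]

instance isMaximal_ker_constantCoeff :
    (RingHom.ker (MvPolynomial.constantCoeff (σ := σ) (R := K))).IsMaximal :=
  RingHom.ker_isMaximal_of_surjective _ fun c =>
    ⟨MvPolynomial.C c, MvPolynomial.constantCoeff_C σ c⟩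

theorem height_ker_constantCoeff [Finite σ] :
    (RingHom.ker (MvPolynomial.constantCoeff (σ := σ) (R := K))).height = Nat.card σ := by
  have := Fintype.ofFinite σ
  apply le_antisymm
  · have height_le := Ideal.height_le_ringKrullDim_of_isPrime
      (I := RingHom.ker (MvPolynomial.constantCoeff (σ := σ) (R := K)))
    rw [MvPolynomial.ringKrullDim_of_isNoetherianRing, ringKrullDim_eq_zero_of_field, zero_add]
      at height_le
    exact_mod_cast height_le
  · rw [Nat.card_eq_fintype_card, ← Finset.card_univ]
    refine (card_le_height_ker_killVars (R := K) Finset.univ).trans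
      (Ideal.height_mono fun p hp => ?_)
    rw [RingHom.mem_ker, killVars_eq_C (by simp)] at hp
    exact MvPolynomial.C_injective σ K (hp.trans MvPolynomial.C_0.symm)

theorem IsRegularSeq.eq_card_of_finite_quotient {σ K : Type} [Field K] [Finite σ] {k : ℕ}
    {f : Fin k → MvPolynomial σ K} (hf : IsRegularSeq f)
    (constantCoeff_eq_zero : ∀ j, MvPolynomial.constantCoeff (f j) = 0)
    [Module.Finite K (MvPolynomial σ K ⧸ Ideal.span (Set.range f))] : k = Nat.card σ := by
  have : IsArtinianRing (MvPolynomial σ K ⧸ Ideal.span (Set.range f)) := .of_finite K _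
  have card_eq : (k : ℕ∞) = Nat.card σ := by
    rw [← height_ker_constantCoeff (σ := σ) (K := K)]
    exact (hf.le_height _ constantCoeff_eq_zero).antisymm
      (height_le_of_isArtinianRing_quotient _ constantCoeff_eq_zero)
  exact_mod_cast card_eq

/-- Setting the finitely many variables of `f` to zero exhibits the polynomial ring on the others
as a quotient of the finite algebra `K[σ] / (f)`. -/
theorem finite_of_finite_quotient {k : ℕ} {f : Fin k → MvPolynomial σ K}
    (constantCoeff_eq_zero : ∀ j, MvPolynomial.constantCoeff (f j) = 0)
    [Module.Finite K (MvPolynomial σ K ⧸ Ideal.span (Set.range f))] : Finite σ := by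
  classical
  let s : Set σ := ⋃ j, (f j).vars
  have s_finite : s.Finite := Set.finite_iUnion fun j => (f j).vars.finite_toSet
  have span_le_ker : Ideal.span (Set.range f) ≤ RingHom.ker (killVars K s) := by
    refine Ideal.span_le.2 ?_
    rintro _ ⟨j, rfl⟩
    have := killVars_eq_C (R := K) (Set.subset_iUnion (fun j => ((f j).vars : Set σ)) j)
    rw [constantCoeff_eq_zero, map_zero] at this
    exact this
  let Φ := Ideal.Quotient.liftₐ (Ideal.span (Set.range f)) (killVars K s) span_le_ker
  have indep : LinearIndependent K fun x : ↥sᶜ => Ideal.Quotient.mkₐ K (Ideal.span (Set.range f))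
      (MvPolynomial.X (x : σ)) := by
    refine LinearIndependent.of_comp Φ.toLinearMap ?_
    have comp_eq : Φ.toLinearMap ∘ (fun x : ↥sᶜ => Ideal.Quotient.mkₐ K (Ideal.span (Set.range f))
        (MvPolynomial.X (x : σ))) = fun x : ↥sᶜ => MvPolynomial.X (x : σ) :=
      funext fun x => killVars_X_of_notMem x.2
    rw [comp_eq]
    exact (MvPolynomial.linearIndependent_X σ K).comp _ Subtype.val_injective
  have compl_finite : sᶜ.Finite := indep.finite
  exact Set.finite_univ_iff.1 (Set.union_compl_self s ▸ s_finite.union compl_finite)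

end KrullDimension

theorem CDGA.finite_of_forall_exists_cocycle {A : CDGA} {B : Type*} [AddCommGroup B] [Module ℚ B]
    (q : A.carrier →ₗ[ℚ] B) (q_d : ∀ u, q (A.d u) = 0)
    (exists_cocycle : ∀ y, ∃ u, A.d u = 0 ∧ q u = y) [FiniteDimensional ℚ A.Hspace] :
    FiniteDimensional ℚ B := by
  have range_le_ker : (LinearMap.range A.d).comap (LinearMap.ker A.d).subtype ≤
      LinearMap.ker (q ∘ₗ (LinearMap.ker A.d).subtype) := by
    rintro u ⟨v, hv⟩
    exact (congrArg q hv).symm.trans (q_d v)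
  refine Module.Finite.of_surjective (Submodule.liftQ _ _ range_le_ker) fun y => ?_
  obtain ⟨u, hu, rfl⟩ := exists_cocycle y
  exact ⟨Submodule.Quotient.mk ⟨u, hu⟩, rfl⟩

namespace SullivanAlgebra

variable {A : SullivanAlgebra}

theorem map_d_eq_zero {B : Type*} [Ring B] [Algebra ℚ B] (q : A.carrier →ₐ[ℚ] B)
    (hq : ∀ i, ∀ v ∈ A.V i, q (A.d v) = 0) (u : A.carrier) : q (A.d u) = 0 := by
  obtain ⟨F⟩ := A.nonempty_freeBasis
  refine CDGA.map_d_eq_zero_of_mem_adjoin q (S := Set.range F.gen) ?_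
    (F.adjoin_eq_top ▸ Algebra.mem_top)
  rintro _ ⟨x, rfl⟩
  exact ⟨⟨_, F.gen_mem_grading x⟩, hq _ _ (F.gen_mem x)⟩

namespace FreeBasis

variable (F : A.FreeBasis)

theorem d_evenIncl (d_even : ∀ i, Even i → ∀ v ∈ A.V i, A.d v = 0) (p : F.EvenPoly) :
    A.d (F.evenIncl p) = 0 := by
  refine CDGA.map_d_eq_zero_of_mem_adjoin (AlgHom.id ℚ A.carrier) ?_
    (F.range_evenIncl ▸ AlgHom.mem_range_self _ p)
  rintro v ⟨i, hi, hv⟩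
  exact ⟨⟨i, A.V_le i hv⟩, d_even i hi v hv⟩

theorem finite_evenPoly_quotient (d_even : ∀ i, Even i → ∀ v ∈ A.V i, A.d v = 0)
    {I : Ideal F.EvenPoly} (hI : ∀ i, ∀ v ∈ A.V i, F.evenProj (A.d v) ∈ I)
    [FiniteDimensional ℚ A.Hspace] : FiniteDimensional ℚ (F.EvenPoly ⧸ I) := by
  let q := (Ideal.Quotient.mkₐ ℚ I).comp F.evenProj
  refine CDGA.finite_of_forall_exists_cocycle q.toLinearMap (map_d_eq_zero q fun i v hv =>
    Ideal.Quotient.eq_zero_iff_mem.2 (hI i v hv)) fun y => ?_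
  obtain ⟨p, rfl⟩ := Ideal.Quotient.mkₐ_surjective ℚ I y
  exact ⟨F.evenIncl p, F.d_evenIncl d_even p, congrArg _ (F.evenProj_evenIncl p)⟩

theorem isRegularSeq_evenProj {W : ℤ → Submodule ℚ A.carrier} (hW : ∀ i, W i ≤ A.V i)
    (hW_even : ∀ i, Even i → W i = A.V i) {k : ℕ} {a : Fin k → freeOn W}
    (central : ∀ j x, a j * x = x * a j) (ha : IsRegularSeq a) :
    IsRegularSeq fun j => F.evenProj (a j) := by
  have range_eq : F.evenIncl.range = freeOnEven W := by
    rw [range_evenIncl]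
    congr 1
    ext v
    exact exists_congr fun i => and_congr_right fun hi => by rw [hW_even i hi]
  let incl : F.EvenPoly →ₐ[ℚ] freeOnEven W := F.evenIncl.codRestrict _ fun p =>
    range_eq ▸ AlgHom.mem_range_self F.evenIncl p
  refine IsRegularSeq.of_comp_bijective (f := incl.toRingHom) ⟨fun p p' h => ?_, ?_⟩
    (F.isRegularSeq_evenPart hW central ha)
  · rw [← F.evenProj_evenIncl p, ← F.evenProj_evenIncl p']
    exact congrArg (fun u : freeOnEven W => F.evenProj u) h
  · rintro ⟨u, hu⟩
    obtain ⟨p, rfl⟩ := range_eq ▸ hu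
    exact ⟨p, rfl⟩

end FreeBasis

theorem exists_even_degree_d {i : ℤ} {v : A.carrier} (hv : v ∈ A.V i) (hodd : Even i → v = 0) :
    ∃ n, 0 < n ∧ Even n ∧ A.d v ∈ A.grading n := by
  rcases eq_or_ne v 0 with rfl | v_ne_zero
  · exact ⟨2, by simp⟩
  · have one_lt : 1 < i := by
      by_contra! h
      exact v_ne_zero ((Submodule.mem_bot ℚ).1 (A.V_lower i h ▸ hv))
    have odd_i : Odd i := Int.not_even_iff_odd.1 (mt hodd v_ne_zero)
    exact ⟨i + 1, by omega, odd_i.add_one, A.d_mem (A.V_le i hv)⟩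

theorem eq_evenDim_of_isRegularSeq {W : ℤ → Submodule ℚ A.carrier} (hW : ∀ i, W i ≤ A.V i)
    (hW_even : ∀ i, Even i → W i = A.V i) (d_even : ∀ i, Even i → ∀ v ∈ A.V i, A.d v = 0)
    {k : ℕ} {a : Fin k → freeOn W}
    (central : ∀ j x, a j * x = x * a j)
    (ha_pos : ∀ j, ∃ i, 0 < i ∧ (a j : A.carrier) ∈ A.grading i)
    (d_mem_span : ∀ i, ∀ v ∈ A.V i, A.d v ∈ Submodule.span ℚ (Set.range fun j => (a j : A.carrier)))
    (ha : IsRegularSeq a) [FiniteDimensional ℚ A.Hspace] : k = A.evenDim := by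
  obtain ⟨F⟩ := A.nonempty_freeBasis
  let f : Fin k → F.EvenPoly := fun j => F.evenProj (a j)
  have f_regular : IsRegularSeq f := F.isRegularSeq_evenProj hW hW_even central ha
  have constantCoeff_f : ∀ j, MvPolynomial.constantCoeff (f j) = 0 := fun j => by
    obtain ⟨i, hi, haj⟩ := ha_pos j
    exact F.constantCoeff_evenProj_eq_zero hi haj
  have evenProj_d_mem : ∀ i, ∀ v ∈ A.V i, F.evenProj (A.d v) ∈ Ideal.span (Set.range f) := by
    intro i v hv
    refine (Submodule.span_le (p := ((Ideal.span (Set.range f)).restrictScalars ℚ).comap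
      F.evenProj.toLinearMap)).2 ?_ (d_mem_span i v hv)
    rintro _ ⟨j, rfl⟩
    exact Ideal.subset_span ⟨j, rfl⟩
  have := F.finite_evenPoly_quotient d_even evenProj_d_mem
  have := finite_of_finite_quotient constantCoeff_f
  rw [F.evenDim_eq_card]
  exact f_regular.eq_card_of_finite_quotient constantCoeff_f

end SullivanAlgebra

open SullivanAlgebra in
theorem two_stage_elliptic_regular_sequence_general (A : SullivanAlgebra)
    (Z₀ Z₁ : ℤ → Submodule ℚ A.carrier)
    (hsplit₂ : ∀ i : ℤ, Z₀ i ⊔ Z₁ i = A.V i)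
    (hZ₁odd : ∀ i : ℤ, Even i → Z₁ i = ⊥)
    (hdZ₀ : ∀ i : ℤ, ∀ x ∈ Z₀ i, A.d x = 0)
    (k : ℕ) (b : Fin k → A.carrier) (degb : Fin k → ℤ)
    (hb : ∀ j : Fin k, b j ∈ Z₁ (degb j))
    (hbspan : Submodule.span ℚ (Set.range b) = ⨆ i : ℤ, Z₁ i)
    (a : Fin k → ↥(Algebra.adjoin ℚ (⋃ i' : ℤ, (Z₀ i' : Set A.carrier))))
    (ha : ∀ j : Fin k, (a j : A.carrier) = A.d (b j))
    (hreg : IsRegularSeq a) :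
    (FiniteDimensional ℚ A.toCDGA.Hspace →
      k = finsum fun i : ℤ => if Even i then Module.finrank ℚ ↥(Z₀ i) else 0) ∧
    ∀ abar : Fin k →
        ↥(Algebra.adjoin ℚ {x : A.carrier | ∃ i : ℤ, Even i ∧ x ∈ Z₀ i}),
      (∀ j : Fin k, (a j : A.carrier) - (abar j : A.carrier) ∈
        Ideal.span {x : A.carrier | ∃ i : ℤ, Odd i ∧ x ∈ Z₀ i}) →
      IsRegularSeq abar := by
  have hZ₀ : ∀ i, Z₀ i ≤ A.V i := fun i => hsplit₂ i ▸ le_sup_left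
  have hZ₁ : ∀ i, Z₁ i ≤ A.V i := fun i => hsplit₂ i ▸ le_sup_right
  have hZ₀_even : ∀ i, Even i → Z₀ i = A.V i := fun i hi => by
    rw [← hsplit₂ i, hZ₁odd i hi, sup_bot_eq]
  choose n n_pos n_even a_mem using fun j => exists_even_degree_d (hZ₁ _ (hb j))
    fun hj => (Submodule.mem_bot ℚ).1 (hZ₁odd _ hj ▸ hb j)
  simp only [← ha] at a_mem
  have central : ∀ j x, a j * x = x * a j := fun j x =>
    Subtype.ext (CDGA.mul_comm_of_even (n_even j) (a_mem j) x)
  refine ⟨fun _ => ?_, fun abar habar => ?_⟩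
  · have V_le_comap : ∀ i, A.V i ≤
        (Submodule.span ℚ (Set.range fun j => (a j : A.carrier))).comap A.d := fun i => by
      rw [← hsplit₂ i, funext ha]
      refine sup_le (fun x hx => by simp [hdZ₀ i x hx]) ((le_iSup Z₁ i).trans ?_)
      exact hbspan ▸ Submodule.span_le.2 (Set.range_subset_iff.2 fun j =>
        Submodule.subset_span (Set.mem_range_self j))
    rw [eq_evenDim_of_isRegularSeq hZ₀ hZ₀_even (fun i hi v hv => hdZ₀ i v (hZ₀_even i hi ▸ hv))
      central (fun j => ⟨n j, n_pos j, a_mem j⟩) V_le_comap hreg]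
    refine finsum_congr fun i => ?_
    split_ifs with hi
    · rw [hZ₀_even i hi]
    · rfl
  · obtain ⟨F⟩ := A.nonempty_freeBasis
    have evenPart_eq : F.evenPart hZ₀ ∘ a = abar :=
      funext fun j => F.evenPart_eq_of_sub_mem hZ₀ (habar j)
    exact evenPart_eq ▸ F.isRegularSeq_evenPart hZ₀ central hreg

/-- **Regular sequences in two-stage elliptic Sullivan algebras**
(from the proof of Proposition 4.2): let `(ΛZ, D)` be an elliptic Sullivan
algebra with `Z = Z_0 ⊕ Z_1`, `D(Z_0) = 0`, `Z_1` concentrated in odd degrees,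
and `D` mapping a basis of `Z_1` onto a regular sequence `a_1, …, a_k` in
`ΛZ_0`.  Then `k = dim Z_0^even`, and the images `ā_1, …, ā_k` of the `a_i`
under the projection `ΛZ_0 → ΛZ_0^even` (sending `Z_0^odd` to `0`) form a
regular sequence in the polynomial algebra `ΛZ_0^even`. -/
theorem two_stage_elliptic_regular_sequence (A : SullivanAlgebra)
    (hell : A.Elliptic)
    (Z₀ Z₁ : ℤ → Submodule ℚ A.carrier)
    (hsplit₁ : ∀ i : ℤ, Z₀ i ⊓ Z₁ i = ⊥)
    (hsplit₂ : ∀ i : ℤ, Z₀ i ⊔ Z₁ i = A.V i)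
    (hZ₁odd : ∀ i : ℤ, Even i → Z₁ i = ⊥)
    (hdZ₀ : ∀ i : ℤ, ∀ x ∈ Z₀ i, A.d x = 0)
    (hdZ₁ : ∀ i : ℤ, ∀ x ∈ Z₁ i,
      A.d x ∈ Algebra.adjoin ℚ (⋃ i' : ℤ, (Z₀ i' : Set A.carrier)))
    -- a homogeneous basis `b` of `Z_1` …
    (k : ℕ) (b : Fin k → A.carrier) (degb : Fin k → ℤ)
    (hb : ∀ j : Fin k, b j ∈ Z₁ (degb j))
    (hbLI : LinearIndependent ℚ b)
    (hbspan : Submodule.span ℚ (Set.range b) = ⨆ i : ℤ, Z₁ i)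
    -- … which `D` maps onto a regular sequence `a` in `ΛZ_0`
    (a : Fin k → ↥(Algebra.adjoin ℚ (⋃ i' : ℤ, (Z₀ i' : Set A.carrier))))
    (ha : ∀ j : Fin k, (a j : A.carrier) = A.d (b j))
    (hreg : IsRegularSeq a) :
    -- then `k = dim Z_0^even` …
    (k = finsum fun i : ℤ => if Even i then Module.finrank ℚ ↥(Z₀ i) else 0) ∧
    -- … and the projections `ā_j` of the `a_j` to `ΛZ_0^even` form a regular
    -- sequence in `ΛZ_0^even`
    ∀ abar : Fin k →
        ↥(Algebra.adjoin ℚ {x : A.carrier | ∃ i : ℤ, Even i ∧ x ∈ Z₀ i}),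
      (∀ j : Fin k, (a j : A.carrier) - (abar j : A.carrier) ∈
        Ideal.span {x : A.carrier | ∃ i : ℤ, Odd i ∧ x ∈ Z₀ i}) →
      IsRegularSeq abar := by
  exact (two_stage_elliptic_regular_sequence_general A Z₀ Z₁ hsplit₂ hZ₁odd hdZ₀ k b degb hb hbspan
    a ha hreg).imp_left fun h => h hell.2
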